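/- arXiv:2601.16576 — 8 statements merged into one kernel-verified Lean document; each statement's English description precedes it below -/
import Mathlib

section
/- The objective function f is coercive: for every sequence (X_m) in ℝ^{k×d}, if the Frobenius norms ‖X_m‖_F tend to infinity as m → ∞, then f(X_m) → ∞. -/
open scoped BigOperators

noncomputable section

/-- The objective function `f` of the gauge multifacility location model with
Laplace-type regularization is coercive: if the Frobenius norms `‖X_m‖_F → ∞`, then
`f(X_m) → ∞`. -/
theorem objective_coercive
    (d n k : ℕ) (hn : 0 < n) (hk : 0 < k)
    (F : Set (EuclideanSpace ℝ (Fin d)))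
    (hFcomp : IsCompact F) (hFconv : Convex ℝ F)
    (hF0 : (0 : EuclideanSpace ℝ (Fin d)) ∈ interior F)
    (a : Fin n → EuclideanSpace ℝ (Fin d)) (ha : Function.Injective a)
    (lam : ℝ) (hlam : 0 < lam)
    (f : (Fin k → EuclideanSpace ℝ (Fin d)) → ℝ)
    (hf : ∀ X : Fin k → EuclideanSpace ℝ (Fin d),
      f X = (∑ i : Fin n, ⨅ ℓ : Fin k, gauge F (X ℓ - a i))
        + lam * n / 2 * ∑ s : Fin k, ∑ t : Fin k, (if s < t then ‖X s - X t‖ ^ 2 else 0))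
    (X : ℕ → (Fin k → EuclideanSpace ℝ (Fin d)))
    (hX : Filter.Tendsto (fun m => Real.sqrt (∑ ℓ : Fin k, ‖X m ℓ‖ ^ 2))
      Filter.atTop Filter.atTop) :
    Filter.Tendsto (fun m => f (X m)) Filter.atTop Filter.atTop := by
  have hRex : ∃ R : ℝ, 0 < R ∧ F ⊆ Metric.closedBall 0 R := by
    obtain ⟨R, hR⟩ := hFcomp.isBounded.subset_closedBall (0 : EuclideanSpace ℝ (Fin d))
    exact ⟨max R 1, by positivity, hR.trans (Metric.closedBall_subset_closedBall (le_max_left _ _))⟩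
  obtain ⟨R, hR, hFR⟩ := hRex
  have habs : Absorbent ℝ F := absorbent_nhds_zero (mem_interior_iff_mem_nhds.1 hF0)
  have hg : ∀ x, ‖x‖ ≤ R * gauge F x := by
    intro x
    have := le_gauge_of_subset_closedBall habs hR.le hFR (x := x)
    rw [div_le_iff₀ hR] at this
    linarith
  have : Nonempty (Fin k) := ⟨⟨0, hk⟩⟩
  have hn' : (0 : ℝ) < n := by exact_mod_cast hn
  have hk' : (0 : ℝ) < k := by exact_mod_cast hk
  let i0 : Fin n := ⟨0, hn⟩
  obtain ⟨c, hc⟩ : ∃ c, c = lam * n / 2 := ⟨_, rfl⟩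
  have hcpos : 0 < c := by rw [hc]; positivity
  have key : ∀ Y : Fin k → EuclideanSpace ℝ (Fin d), ∀ l : Fin k,
      ‖Y l‖ ≤ (R + 1 / c) * f Y + (1 + ‖a i0‖) := by
    intro Y l
    have hfY := hf Y
    rw [← hc] at hfY
    obtain ⟨l0, hl0⟩ := exists_eq_ciInf_of_finite (f := fun l : Fin k => gauge F (Y l - a i0))
    have hinf : ∀ i : Fin n, 0 ≤ ⨅ l : Fin k, gauge F (Y l - a i) :=
      fun i => Real.iInf_nonneg (fun l => gauge_nonneg _)
    have h1 : gauge F (Y l0 - a i0) ≤ ∑ i : Fin n, ⨅ l : Fin k, gauge F (Y l - a i) := by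
      have := Finset.single_le_sum (f := fun i : Fin n => ⨅ l : Fin k, gauge F (Y l - a i))
        (fun i _ => hinf i) (Finset.mem_univ i0)
      exact hl0.le.trans this
    have hnn : ∀ s t : Fin k, 0 ≤ (if s < t then ‖Y s - Y t‖ ^ 2 else 0) := by
      intro s t; split_ifs <;> positivity
    have hpair : ∀ s t : Fin k, (if s < t then ‖Y s - Y t‖ ^ 2 else 0) ≤
        ∑ s : Fin k, ∑ t : Fin k, (if s < t then ‖Y s - Y t‖ ^ 2 else 0) := by
      intro s t
      refine (Finset.single_le_sum (f := fun t => if s < t then ‖Y s - Y t‖ ^ 2 else 0)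
        (fun t _ => hnn s t) (Finset.mem_univ t)).trans ?_
      exact Finset.single_le_sum
        (f := fun s => ∑ t : Fin k, if s < t then ‖Y s - Y t‖ ^ 2 else 0)
        (fun s _ => Finset.sum_nonneg (fun t _ => hnn s t)) (Finset.mem_univ s)
    have h2 : ‖Y l - Y l0‖ ^ 2 ≤
        ∑ s : Fin k, ∑ t : Fin k, (if s < t then ‖Y s - Y t‖ ^ 2 else 0) := by
      rcases lt_trichotomy l l0 with h | h | h
      · simpa [h] using hpair l l0
      · subst h
        simpa using hpair l l
      · have := hpair l0 l
        rw [if_pos h, norm_sub_rev] at this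
        exact this
    generalize (∑ i : Fin n, ⨅ l : Fin k, gauge F (Y l - a i)) = S1 at *
    generalize (∑ s : Fin k, ∑ t : Fin k, (if s < t then ‖Y s - Y t‖ ^ 2 else 0)) = S2 at *
    have hS1 : 0 ≤ S1 := (gauge_nonneg _).trans h1
    have hS2 : 0 ≤ S2 := (sq_nonneg _).trans h2
    have hfS1 : S1 ≤ f Y := by rw [hfY]; linarith [mul_nonneg hcpos.le hS2]
    have hfS2 : S2 ≤ 1 / c * f Y := by
      rw [one_div, ← div_eq_inv_mul, le_div_iff₀ hcpos, hfY]; linarith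
    have h3 : ‖Y l0 - a i0‖ ≤ R * f Y :=
      (hg _).trans (mul_le_mul_of_nonneg_left (h1.trans hfS1) hR.le)
    have h4 : ‖Y l - Y l0‖ ≤ 1 + S2 := by nlinarith [sq_nonneg (‖Y l - Y l0‖ - 1)]
    have h5 : ‖Y l‖ ≤ ‖Y l - Y l0‖ + ‖Y l0 - a i0‖ + ‖a i0‖ := by
      have := norm_add₃_le (a := Y l - Y l0) (b := Y l0 - a i0) (c := a i0)
      simpa using this
    linarith
  have key2 : ∀ Y : Fin k → EuclideanSpace ℝ (Fin d),
      Real.sqrt (∑ l : Fin k, ‖Y l‖ ^ 2) ≤ k * ((R + 1 / c) * f Y + (1 + ‖a i0‖)) := by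
    intro Y
    have h1 : Real.sqrt (∑ l : Fin k, ‖Y l‖ ^ 2) ≤ ∑ l : Fin k, ‖Y l‖ := by
      apply Real.sqrt_le_iff.2 ⟨Finset.sum_nonneg (fun _ _ => norm_nonneg _), ?_⟩
      exact Finset.sum_sq_le_sq_sum_of_nonneg (fun _ _ => norm_nonneg _)
    refine h1.trans ?_
    refine (Finset.sum_le_sum (fun l _ => key Y l)).trans ?_
    rw [Finset.sum_const, Finset.card_univ, Fintype.card_fin, nsmul_eq_mul]
  rw [Filter.tendsto_atTop] at hX ⊢
  intro b
  filter_upwards [hX (k * ((R + 1 / c) * b + (1 + ‖a i0‖)))] with m hm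
  have h := le_of_mul_le_mul_left (hm.trans (key2 (X m))) hk'
  have hA : 0 < R + 1 / c := by positivity
  exact le_of_mul_le_mul_left (by linarith) hA
end
end

section
/- Let X̄ = (x̄_1,…,x̄_k) ∈ ℝ^{k×d} be such that L_i(X̄) is a singleton for every i = 1,…,n. Then there exists ε > 0 such that for every X = (x_1,…,x_k) ∈ ℝ^{k×d} with ‖x_ℓ − x̄_ℓ‖ < ε for all ℓ = 1,…,k, one has I_ℓ(X) = I_ℓ(X̄) for all ℓ = 1,…,k, where I_ℓ(X) = {i ∈ {1,…,n} : ℓ ∈ L_i(X)}. -/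
open scoped BigOperators

noncomputable section

/-- If every set `L_i(X̄)` is a singleton, then the clusters
`I_ℓ(X) = {i | ℓ ∈ L_i(X)}` are locally stable: there is `ε > 0` such that
`I_ℓ(X) = I_ℓ(X̄)` for all `ℓ` whenever `‖x_ℓ − x̄_ℓ‖ < ε` for all `ℓ`. -/
theorem cluster_index_sets_locally_stable
    (d n k : ℕ) (hn : 0 < n) (hk : 0 < k)
    (F : Set (EuclideanSpace ℝ (Fin d)))
    (hFcomp : IsCompact F) (hFconv : Convex ℝ F)
    (hF0 : (0 : EuclideanSpace ℝ (Fin d)) ∈ interior F)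
    (a : Fin n → EuclideanSpace ℝ (Fin d)) (ha : Function.Injective a)
    (L : (Fin k → EuclideanSpace ℝ (Fin d)) → Fin n → Set (Fin k))
    (hL : ∀ X i, L X i =
      {ℓ : Fin k | gauge F (X ℓ - a i) = ⨅ r : Fin k, gauge F (X r - a i)})
    (I : (Fin k → EuclideanSpace ℝ (Fin d)) → Fin k → Set (Fin n))
    (hI : ∀ X ℓ, I X ℓ = {i : Fin n | ℓ ∈ L X i})
    (Xb : Fin k → EuclideanSpace ℝ (Fin d))
    (hsing : ∀ i : Fin n, ∃ ℓ : Fin k, L Xb i = {ℓ}) :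
    ∃ ε > (0 : ℝ), ∀ X : Fin k → EuclideanSpace ℝ (Fin d),
      (∀ ℓ : Fin k, ‖X ℓ - Xb ℓ‖ < ε) → ∀ ℓ : Fin k, I X ℓ = I Xb ℓ := by
  have : Nonempty (Fin k) := ⟨⟨0, hk⟩⟩
  have hg : Continuous (gauge F) :=
    continuous_gauge hFconv (mem_interior_iff_mem_nhds.1 hF0)
  have key : ∀ X i ℓ, ℓ ∈ L X i ↔ ∀ r, gauge F (X ℓ - a i) ≤ gauge F (X r - a i) := by
    intro X i ℓ
    have hb : BddBelow (Set.range fun r : Fin k => gauge F (X r - a i)) :=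
      (Set.finite_range _).bddBelow
    rw [hL, Set.mem_setOf_eq]
    constructor
    · intro h r
      rw [h]
      exact ciInf_le hb r
    · intro h
      exact le_antisymm (le_ciInf h) (ciInf_le hb ℓ)
  choose σ hσ using hsing
  have hσmem : ∀ i ℓ, ℓ ∈ L Xb i ↔ ℓ = σ i := by
    intro i ℓ
    rw [hσ i, Set.mem_singleton_iff]
  have hstrict : ∀ i r, r ≠ σ i → gauge F (Xb (σ i) - a i) < gauge F (Xb r - a i) := by
    intro i r hr
    have h1 := (key Xb i (σ i)).1 ((hσmem i _).2 rfl)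
    by_contra hlt
    push Not at hlt
    exact hr ((hσmem i r).1 ((key Xb i r).2 fun s => hlt.trans (h1 s)))
  have hev : ∀ᶠ X in nhds Xb, ∀ i r, r ≠ σ i →
      gauge F (X (σ i) - a i) < gauge F (X r - a i) := by
    rw [Filter.eventually_all]
    intro i
    rw [Filter.eventually_all]
    intro r
    by_cases hr : r = σ i
    · exact Filter.Eventually.of_forall fun X h => absurd hr h
    · have c : ∀ s : Fin k, Continuous fun X : Fin k → EuclideanSpace ℝ (Fin d) =>
          gauge F (X s - a i) := fun s =>
        hg.comp ((continuous_apply s).sub continuous_const)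
      filter_upwards [(c (σ i)).continuousAt.eventually_lt (c r).continuousAt
        (hstrict i r hr)] with X hX _
      exact hX
  obtain ⟨ε, hε, H⟩ := Metric.eventually_nhds_iff.1 hev
  refine ⟨ε, hε, fun X hX ℓ => ?_⟩
  have HX := H (y := X) ((dist_pi_lt_iff hε).2 fun s => by
    rw [dist_eq_norm]; exact hX s)
  rw [hI, hI]
  ext i
  rw [Set.mem_setOf_eq, Set.mem_setOf_eq, hσmem, key]
  constructor
  · intro h
    by_contra hne
    exact absurd (h (σ i)) (not_le.2 (HX i ℓ hne))
  · rintro rfl r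
    by_cases hr : r = σ i
    · rw [hr]
    · exact (HX i r hr).le
end
end

section
/- Let X̄ = (x̄_1,…,x̄_k) ∈ ℝ^{k×d} be such that L_i(X̄) is a singleton for every i = 1,…,n. If X̄ is a local minimizer of f, then for each ℓ ∈ {1,…,k}, the point x̄_ℓ is a global minimizer over ℝ^d of the convex function φ_ℓ(x) = Σ_{i∈I_ℓ(X̄)} ρ(x − a_i) + (λn/2) Σ_{j=1, j≠ℓ}^k ‖x − x̄_j‖², where I_ℓ(X̄) = {i ∈ {1,…,n} : ℓ ∈ L_i(X̄)}. -/
open scoped BigOperators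
open scoped Classical

noncomputable section

theorem pair_sum_split {k : ℕ} (g : Fin k → Fin k → ℝ) (hg : ∀ s t, g s t = g t s) (l : Fin k) :
    (∑ s : Fin k, ∑ t : Fin k, (if s < t then g s t else 0))
      = (∑ s ∈ Finset.univ.erase l, ∑ t ∈ Finset.univ.erase l, (if s < t then g s t else 0))
        + ∑ j ∈ Finset.univ.erase l, g l j := by
  have h1 : ∀ h : Fin k → ℝ, ∑ s, h s = h l + ∑ s ∈ Finset.univ.erase l, h s := fun h =>
    (Finset.add_sum_erase _ h (Finset.mem_univ l)).symm
  rw [h1]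
  simp only [h1 (fun t => if _ < t then g _ t else 0)]
  rw [Finset.sum_add_distrib]
  have h2 : ∑ j ∈ Finset.univ.erase l, g l j
      = ∑ t ∈ Finset.univ.erase l, (if l < t then g l t else 0)
        + ∑ s ∈ Finset.univ.erase l, (if s < l then g s l else 0) := by
    rw [← Finset.sum_add_distrib]
    refine Finset.sum_congr rfl fun j hj => ?_
    have hne := Finset.ne_of_mem_erase hj
    rcases lt_or_gt_of_ne hne with h | h
    · simp [h, h.not_gt, hg l j]
    · simp [h, h.not_gt]
  rw [h2]
  simp

/-- If each `L_i(X̄)` is a singleton and `X̄` is a local minimizer of `f`,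
then each `x̄_ℓ` is a global minimizer over `ℝ^d` of
`φ_ℓ(x) = Σ_{i ∈ I_ℓ(X̄)} ρ(x − a_i) + (λn/2) Σ_{j ≠ ℓ} ‖x − x̄_j‖²`. -/
theorem local_min_implies_row_global_min
    (d n k : ℕ) (hn : 0 < n) (hk : 0 < k)
    (F : Set (EuclideanSpace ℝ (Fin d)))
    (hFcomp : IsCompact F) (hFconv : Convex ℝ F)
    (hF0 : (0 : EuclideanSpace ℝ (Fin d)) ∈ interior F)
    (a : Fin n → EuclideanSpace ℝ (Fin d)) (ha : Function.Injective a)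
    (lam : ℝ) (hlam : 0 < lam)
    (f : (Fin k → EuclideanSpace ℝ (Fin d)) → ℝ)
    (hf : ∀ X : Fin k → EuclideanSpace ℝ (Fin d),
      f X = (∑ i : Fin n, ⨅ ℓ : Fin k, gauge F (X ℓ - a i))
        + lam * n / 2 * ∑ s : Fin k, ∑ t : Fin k, (if s < t then ‖X s - X t‖ ^ 2 else 0))
    (L : (Fin k → EuclideanSpace ℝ (Fin d)) → Fin n → Set (Fin k))
    (hL : ∀ X i, L X i =
      {ℓ : Fin k | gauge F (X ℓ - a i) = ⨅ r : Fin k, gauge F (X r - a i)})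
    (Xb : Fin k → EuclideanSpace ℝ (Fin d))
    (hsing : ∀ i : Fin n, ∃ ℓ : Fin k, L Xb i = {ℓ})
    (hlocal : ∃ ε > (0 : ℝ), ∀ X : Fin k → EuclideanSpace ℝ (Fin d),
      (∀ ℓ : Fin k, ‖X ℓ - Xb ℓ‖ < ε) → f Xb ≤ f X)
    (phi : Fin k → EuclideanSpace ℝ (Fin d) → ℝ)
    (hphi : ∀ (ℓ : Fin k) (x : EuclideanSpace ℝ (Fin d)),
      phi ℓ x = (∑ i ∈ Finset.univ.filter (fun i : Fin n => ℓ ∈ L Xb i), gauge F (x - a i))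
        + lam * n / 2 * ∑ j ∈ Finset.univ.erase ℓ, ‖x - Xb j‖ ^ 2) :
    ∀ (ℓ : Fin k) (x : EuclideanSpace ℝ (Fin d)), phi ℓ (Xb ℓ) ≤ phi ℓ x := by
  intro l
  obtain ⟨ε, hε, hmin⟩ := hlocal
  have hbdd : ∀ (X : Fin k → EuclideanSpace ℝ (Fin d)) (i : Fin n),
      BddBelow (Set.range fun r : Fin k => gauge F (X r - a i)) := fun X i =>
    (Set.finite_range _).bddBelow
  have hc : 0 ≤ lam * n / 2 := by positivity
  have habs : Absorbent ℝ F := absorbent_nhds_zero (mem_interior_iff_mem_nhds.1 hF0)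
  -- comparison
  have hcmp : ∀ x, f (Function.update Xb l x) - f Xb ≤ phi l x - phi l (Xb l) := by
    intro x
    set X := Function.update Xb l x with hX
    have hXl : X l = x := by simp [hX]
    have hXj : ∀ j, j ≠ l → X j = Xb j := fun j hj => by simp [hX, hj]
    have e1 := pair_sum_split (fun s t => ‖X s - X t‖ ^ 2)
      (fun s t => by simp only [norm_sub_rev]) l
    have e2 := pair_sum_split (fun s t => ‖Xb s - Xb t‖ ^ 2)
      (fun s t => by simp only [norm_sub_rev]) l
    have e3 : (∑ s ∈ Finset.univ.erase l, ∑ t ∈ Finset.univ.erase l,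
        (if s < t then ‖X s - X t‖ ^ 2 else 0)) =
        (∑ s ∈ Finset.univ.erase l, ∑ t ∈ Finset.univ.erase l,
        (if s < t then ‖Xb s - Xb t‖ ^ 2 else 0)) :=
      Finset.sum_congr rfl fun s hs => Finset.sum_congr rfl fun t ht => by
        rw [hXj s (Finset.ne_of_mem_erase hs), hXj t (Finset.ne_of_mem_erase ht)]
    have e4 : (∑ j ∈ Finset.univ.erase l, ‖X l - X j‖ ^ 2)
        = ∑ j ∈ Finset.univ.erase l, ‖x - Xb j‖ ^ 2 :=
      Finset.sum_congr rfl fun s hs => by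
        rw [hXj s (Finset.ne_of_mem_erase hs), hXl]
    have e5 : (∑ i : Fin n, ⨅ r : Fin k, gauge F (X r - a i))
        - (∑ i : Fin n, ⨅ r : Fin k, gauge F (Xb r - a i))
        ≤ (∑ i ∈ Finset.univ.filter (fun i : Fin n => l ∈ L Xb i), gauge F (x - a i))
        - (∑ i ∈ Finset.univ.filter (fun i : Fin n => l ∈ L Xb i), gauge F (Xb l - a i)) := by
      rw [Finset.sum_filter, Finset.sum_filter, ← Finset.sum_sub_distrib,
        ← Finset.sum_sub_distrib]
      refine Finset.sum_le_sum fun i _ => ?_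
      by_cases hi : l ∈ L Xb i
      · rw [if_pos hi, if_pos hi]
        have h1 := ciInf_le (hbdd X i) l
        rw [hL] at hi
        have h2 : gauge F (Xb l - a i) = ⨅ r : Fin k, gauge F (Xb r - a i) := hi
        simp only [hXl] at h1
        linarith
      · rw [if_neg hi, if_neg hi]
        obtain ⟨m, hm⟩ := hsing i
        have hmem : m ∈ L Xb i := by rw [hm]; rfl
        have hml : m ≠ l := fun h => hi (h ▸ hmem)
        rw [hL] at hmem
        have h2 : gauge F (Xb m - a i) = ⨅ r : Fin k, gauge F (Xb r - a i) := hmem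
        have h1 := ciInf_le (hbdd X i) m
        simp only [hXj m hml] at h1
        linarith
    rw [hf, hf, hphi, hphi, e1, e2, e3, e4]
    linarith
  have hconv : ConvexOn ℝ Set.univ (phi l) := by
    have hg : ∀ b, ConvexOn ℝ Set.univ (fun x => gauge F (x - b)) := by
      intro b
      refine ⟨convex_univ, fun x _ y _ p q hp hq hpq => ?_⟩
      have : p • x + q • y - b = p • (x - b) + q • (y - b) := by
        have : b = (p + q) • b := by rw [hpq, one_smul]
        nth_rewrite 1 [this]
        module
      simp only [this]
      refine (gauge_add_le hFconv habs _ _).trans ?_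
      rw [gauge_smul_of_nonneg hp, gauge_smul_of_nonneg hq]
    have hs : ∀ b : EuclideanSpace ℝ (Fin d),
        ConvexOn ℝ Set.univ (fun x => ‖x - b‖ ^ 2) := by
      intro b
      have h := (convexOn_univ_dist (E := EuclideanSpace ℝ (Fin d)) b)
      simp only [dist_eq_norm] at h
      exact h.pow (fun _ _ => norm_nonneg _) 2
    have hsum : ∀ {ι : Type} (S : Finset ι) (h : ι → EuclideanSpace ℝ (Fin d) → ℝ),
        (∀ i, ConvexOn ℝ Set.univ (h i)) → ConvexOn ℝ Set.univ (fun x => ∑ i ∈ S, h i x) := by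
      intro ι S h hh
      induction S using Finset.induction_on with
      | empty => simpa using convexOn_const (0 : ℝ) convex_univ
      | insert i S hi ih =>
        simp only [Finset.sum_insert hi]
        exact (hh i).add ih
    rw [show phi l = _ from funext (hphi l)]
    exact (hsum _ _ fun i => hg (a i)).add ((hsum _ _ fun j => hs (Xb j)).smul hc)
  have hloc : IsLocalMin (phi l) (Xb l) := by
    filter_upwards [Metric.ball_mem_nhds (Xb l) hε] with x hx
    have h1 := hcmp x
    have h2 := hmin (Function.update Xb l x) (fun j => by
      by_cases hj : j = l
      · subst hj
        simpa [dist_eq_norm] using hx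
      · simpa [hj] using hε)
    linarith
  exact IsMinOn.of_isLocalMin_of_convex_univ hloc hconv
end
end

section
/- The optimal value function V on ℝ^{n×d} is globally Lipschitz continuous with respect to the Frobenius norm: |V(A) − V(B)| ≤ ‖F°‖ √n ‖A − B‖_F for all A, B ∈ ℝ^{n×d}. -/
open scoped BigOperators RealInnerProductSpace

noncomputable section

theorem aux_gauge_le {d : ℕ} (F : Set (EuclideanSpace ℝ (Fin d)))
    (hFcomp : IsCompact F) (hFconv : Convex ℝ F)
    (hF0 : (0 : EuclideanSpace ℝ (Fin d)) ∈ interior F) (M : ℝ)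
    (hM : M = sSup ((fun v : EuclideanSpace ℝ (Fin d) => ‖v‖) ''
      {v : EuclideanSpace ℝ (Fin d) | ∀ x ∈ F, ⟪v, x⟫ ≤ 1})) :
    0 ≤ M ∧ ∀ z, gauge F z ≤ M * ‖z‖ := by
  obtain ⟨r, hr, hball⟩ := Metric.nhds_basis_closedBall.mem_iff.1 (mem_interior_iff_mem_nhds.1 hF0)
  have hbdd : BddAbove ((fun v : EuclideanSpace ℝ (Fin d) => ‖v‖) ''
      {v : EuclideanSpace ℝ (Fin d) | ∀ x ∈ F, ⟪v, x⟫ ≤ 1}) := by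
    refine ⟨1 / r, ?_⟩
    rintro _ ⟨v, hv, rfl⟩
    show ‖v‖ ≤ 1 / r
    by_cases h0 : ‖v‖ = 0
    · rw [h0]; positivity
    have h1 := hv ((r / ‖v‖) • v) (hball (by
      rw [mem_closedBall_zero_iff, norm_smul, Real.norm_eq_abs, abs_of_nonneg (by positivity)]
      field_simp; exact le_rfl))
    rw [real_inner_smul_right, real_inner_self_eq_norm_sq] at h1
    rw [le_div_iff₀ hr]
    have : r / ‖v‖ * ‖v‖ ^ 2 = ‖v‖ * r := by field_simp
    linarith
  have hM0 : 0 ≤ M := by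
    rw [hM]
    exact Real.sSup_nonneg (by rintro _ ⟨v, -, rfl⟩; exact norm_nonneg v)
  refine ⟨hM0, fun z => le_of_forall_gt_imp_ge_of_dense fun t ht => ?_⟩
  have ht0 : 0 < t := lt_of_le_of_lt (by positivity) ht
  have hz : t⁻¹ • z ∈ F := by
    by_contra hn
    obtain ⟨φ, u, h1, h2⟩ := geometric_hahn_banach_closed_point hFconv hFcomp.isClosed hn
    have hu : 0 < u := by simpa using h1 0 (interior_subset hF0)
    set w := (InnerProductSpace.toDual ℝ (EuclideanSpace ℝ (Fin d))).symm φ with hw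
    have hφ : ∀ x, φ x = ⟪w, x⟫ := fun x => by
      rw [hw, InnerProductSpace.toDual_symm_apply]
    have hmem : ‖u⁻¹ • w‖ ≤ M := by
      rw [hM]
      refine le_csSup hbdd ⟨u⁻¹ • w, fun x hx => ?_, rfl⟩
      rw [real_inner_smul_left, ← hφ, inv_mul_le_iff₀ hu]
      linarith [h1 x hx]
    have h3 : ⟪u⁻¹ • w, z⟫ ≤ M * ‖z‖ := (real_inner_le_norm _ _).trans (by gcongr)
    rw [real_inner_smul_left, ← hφ] at h3
    rw [map_smul, smul_eq_mul, lt_inv_mul_iff₀ ht0] at h2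
    have h4 : t < u⁻¹ * φ z := by
      rw [lt_inv_mul_iff₀ hu]; linarith
    linarith
  exact gauge_le_of_mem ht0.le ⟨_, hz, by simp [smul_smul, ht0.ne']⟩

/-- The optimal value function `V(A) = inf_X f(X; A)` is globally Lipschitz
with constant `‖F°‖ √n` with respect to the Frobenius norm on the data. -/
theorem optimal_value_lipschitz
    (d n k : ℕ) (hn : 0 < n) (hk : 0 < k)
    (F : Set (EuclideanSpace ℝ (Fin d)))
    (hFcomp : IsCompact F) (hFconv : Convex ℝ F)
    (hF0 : (0 : EuclideanSpace ℝ (Fin d)) ∈ interior F)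
    (polar : Set (EuclideanSpace ℝ (Fin d)))
    (hpolar : polar = {v : EuclideanSpace ℝ (Fin d) | ∀ x ∈ F, ⟪v, x⟫ ≤ 1})
    (normPolar : ℝ)
    (hnormPolar : normPolar = sSup ((fun v : EuclideanSpace ℝ (Fin d) => ‖v‖) '' polar))
    (lam : ℝ) (hlam : 0 < lam)
    (f : (Fin k → EuclideanSpace ℝ (Fin d)) → (Fin n → EuclideanSpace ℝ (Fin d)) → ℝ)
    (hf : ∀ X A, f X A = (∑ i : Fin n, ⨅ ℓ : Fin k, gauge F (X ℓ - A i))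
        + lam * n / 2 * ∑ s : Fin k, ∑ t : Fin k, (if s < t then ‖X s - X t‖ ^ 2 else 0))
    (V : (Fin n → EuclideanSpace ℝ (Fin d)) → ℝ)
    (hV : ∀ A, V A = ⨅ X : Fin k → EuclideanSpace ℝ (Fin d), f X A)
    (A B : Fin n → EuclideanSpace ℝ (Fin d)) :
    |V A - V B| ≤ normPolar * Real.sqrt n * Real.sqrt (∑ i : Fin n, ‖A i - B i‖ ^ 2) := by
  subst hpolar
  obtain ⟨hM0, hg⟩ := aux_gauge_le F hFcomp hFconv hF0 normPolar hnormPolar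
  have : Nonempty (Fin k) := ⟨⟨0, hk⟩⟩
  have habs : Absorbent ℝ F := absorbent_nhds_zero (mem_interior_iff_mem_nhds.1 hF0)
  have hf0 : ∀ X A, 0 ≤ f X A := fun X A => by
    rw [hf]
    have h1 : 0 ≤ ∑ i : Fin n, ⨅ ℓ : Fin k, gauge F (X ℓ - A i) :=
      Finset.sum_nonneg fun i _ => Real.iInf_nonneg fun l => gauge_nonneg _
    have h2 : 0 ≤ ∑ s : Fin k, ∑ t : Fin k, (if s < t then ‖X s - X t‖ ^ 2 else 0) :=
      Finset.sum_nonneg fun s _ => Finset.sum_nonneg fun t _ => by split_ifs <;> positivity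
    positivity
  have key : ∀ A B : Fin n → EuclideanSpace ℝ (Fin d), V A - V B ≤
      normPolar * Real.sqrt n * Real.sqrt (∑ i : Fin n, ‖A i - B i‖ ^ 2) := by
    intro A B
    have hcs : ∑ i : Fin n, ‖A i - B i‖ ≤
        Real.sqrt n * Real.sqrt (∑ i : Fin n, ‖A i - B i‖ ^ 2) := by
      rw [← Real.sqrt_mul (by positivity)]
      apply Real.le_sqrt_of_sq_le
      simpa using sq_sum_le_card_mul_sum_sq (s := Finset.univ) (f := fun i : Fin n => ‖A i - B i‖)
    suffices h : V A - normPolar * ∑ i : Fin n, ‖A i - B i‖ ≤ V B by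
      have := mul_le_mul_of_nonneg_left hcs hM0
      linarith
    rw [hV B]
    refine le_ciInf fun X => ?_
    have h1 : V A ≤ f X A := by
      rw [hV A]
      exact ciInf_le ⟨0, by rintro _ ⟨Y, rfl⟩; exact hf0 Y A⟩ X
    have h2 : (∑ i : Fin n, ⨅ ℓ : Fin k, gauge F (X ℓ - A i)) ≤
        (∑ i : Fin n, ⨅ ℓ : Fin k, gauge F (X ℓ - B i)) +
          normPolar * ∑ i : Fin n, ‖A i - B i‖ := by
      rw [Finset.mul_sum, ← Finset.sum_add_distrib]
      refine Finset.sum_le_sum fun i _ => ?_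
      rw [← sub_le_iff_le_add]
      refine le_ciInf fun l => ?_
      have h3 : (⨅ ℓ : Fin k, gauge F (X ℓ - A i)) ≤ gauge F (X l - A i) :=
        ciInf_le (Set.finite_range _).bddBelow l
      have h4 := gauge_add_le hFconv habs (X l - B i) (B i - A i)
      rw [sub_add_sub_cancel] at h4
      have h5 := hg (B i - A i)
      rw [norm_sub_rev] at h5
      linarith
    rw [hf] at h1 ⊢
    linarith
  rw [abs_le]
  refine ⟨?_, key A B⟩
  have h := key B A
  simp only [fun i => norm_sub_rev (B i) (A i)] at h
  linarith
end
end

section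
/- The global optimal solution mapping S : ℝ^{n×d} ⇉ ℝ^{k×d}, S(A) = {X̄ ∈ ℝ^{k×d} : f(X̄; A) = V(A)}, is upper semicontinuous at every point: for every Ā ∈ ℝ^{n×d} and every open set U ⊆ ℝ^{k×d} with S(Ā) ⊆ U, there exists an open neighborhood V of Ā in ℝ^{n×d} such that S(A) ⊆ U for all A ∈ V. -/
open scoped BigOperators

noncomputable section

/-- The global optimal solution mapping `S(A) = {X̄ | f(X̄; A) = V(A)}` is
upper semicontinuous: for every `Ā` and every open `U ⊇ S(Ā)` there is an open neighborhood
`W` of `Ā` with `S(A) ⊆ U` for all `A ∈ W`. -/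
theorem solution_mapping_upper_semicontinuous
    (d n k : ℕ) (hn : 0 < n) (hk : 0 < k)
    (F : Set (EuclideanSpace ℝ (Fin d)))
    (hFcomp : IsCompact F) (hFconv : Convex ℝ F)
    (hF0 : (0 : EuclideanSpace ℝ (Fin d)) ∈ interior F)
    (lam : ℝ) (hlam : 0 < lam)
    (f : (Fin k → EuclideanSpace ℝ (Fin d)) → (Fin n → EuclideanSpace ℝ (Fin d)) → ℝ)
    (hf : ∀ X A, f X A = (∑ i : Fin n, ⨅ ℓ : Fin k, gauge F (X ℓ - A i))
        + lam * n / 2 * ∑ s : Fin k, ∑ t : Fin k, (if s < t then ‖X s - X t‖ ^ 2 else 0))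
    (V : (Fin n → EuclideanSpace ℝ (Fin d)) → ℝ)
    (hV : ∀ A, V A = ⨅ X : Fin k → EuclideanSpace ℝ (Fin d), f X A)
    (S : (Fin n → EuclideanSpace ℝ (Fin d)) → Set (Fin k → EuclideanSpace ℝ (Fin d)))
    (hS : ∀ A, S A = {Xb | f Xb A = V A})
    (Ab : Fin n → EuclideanSpace ℝ (Fin d))
    (U : Set (Fin k → EuclideanSpace ℝ (Fin d))) (hU : IsOpen U) (hSU : S Ab ⊆ U) :
    ∃ W : Set (Fin n → EuclideanSpace ℝ (Fin d)),
      IsOpen W ∧ Ab ∈ W ∧ ∀ A ∈ W, S A ⊆ U := by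
  have : Nonempty (Fin k) := ⟨⟨0, hk⟩⟩
  have hFn : F ∈ nhds (0 : EuclideanSpace ℝ (Fin d)) := mem_interior_iff_mem_nhds.1 hF0
  have hg : Continuous (gauge F) := continuous_gauge hFconv hFn
  have habs : Absorbent ℝ F := absorbent_nhds_zero hFn
  have hcont : Continuous (fun p : (Fin k → EuclideanSpace ℝ (Fin d)) ×
      (Fin n → EuclideanSpace ℝ (Fin d)) => f p.1 p.2) := by
    simp only [hf]
    refine Continuous.add (continuous_finsetSum _ fun i _ => ?_)
      (continuous_const.mul (continuous_finsetSum _ fun s _ =>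
        continuous_finsetSum _ fun t _ => ?_))
    · simp only [← Finset.inf'_univ_eq_ciInf]
      refine Continuous.finset_inf'_apply _ fun l _ => hg.comp ?_
      fun_prop
    · split_ifs
      · fun_prop
      · exact continuous_const
  have hn' : (0 : ℝ) < n := by exact_mod_cast hn
  have hc : 0 < lam * n / 2 := by positivity
  have hG0 : ∀ (X : Fin k → EuclideanSpace ℝ (Fin d)) (A : Fin n → EuclideanSpace ℝ (Fin d)) i,
      0 ≤ ⨅ l : Fin k, gauge F (X l - A i) := fun X A i =>
    Real.iInf_nonneg fun l => gauge_nonneg _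
  have hP0 : ∀ (X : Fin k → EuclideanSpace ℝ (Fin d)) (s t : Fin k),
      0 ≤ (if s < t then ‖X s - X t‖ ^ 2 else 0) := fun X s t => by
    split_ifs <;> positivity
  have hGs : ∀ (X : Fin k → EuclideanSpace ℝ (Fin d)) (A : Fin n → EuclideanSpace ℝ (Fin d)),
      0 ≤ ∑ i : Fin n, ⨅ l : Fin k, gauge F (X l - A i) := fun X A =>
    Finset.sum_nonneg fun i _ => hG0 X A i
  have hPs : ∀ (X : Fin k → EuclideanSpace ℝ (Fin d)),
      0 ≤ lam * n / 2 * ∑ s : Fin k, ∑ t : Fin k, (if s < t then ‖X s - X t‖ ^ 2 else 0) :=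
    fun X => mul_nonneg hc.le <|
      Finset.sum_nonneg fun s _ => Finset.sum_nonneg fun t _ => hP0 X s t
  have hf0 : ∀ X A, 0 ≤ f X A := fun X A => by
    rw [hf]; exact add_nonneg (hGs X A) (hPs X)
  have hVle : ∀ X A, V A ≤ f X A := fun X A => by
    rw [hV]
    exact ciInf_le ⟨0, by rintro _ ⟨Y, rfl⟩; exact hf0 Y A⟩ X
  -- coercivity
  obtain ⟨r, hr, hFr⟩ := hFcomp.isBounded.subset_closedBall_lt 0 0
  let i0 : Fin n := ⟨0, hn⟩
  set C : ℝ := f 0 Ab + 1 with hC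
  set D : ℝ := C / (lam * n / 2) + 1 with hD
  set R : ℝ := D + r * C + (‖Ab i0‖ + 1) with hR
  have hcoer : ∀ X A, f X A ≤ C → ‖A i0‖ ≤ ‖Ab i0‖ + 1 →
      X ∈ Metric.closedBall (0 : Fin k → EuclideanSpace ℝ (Fin d)) R := by
    intro X A hX hA
    have hC0 : 0 ≤ C := (hf0 X A).trans hX
    rw [hf] at hX
    have h1 : (⨅ l : Fin k, gauge F (X l - A i0)) ≤ C := by
      have := Finset.single_le_sum (f := fun i => ⨅ l : Fin k, gauge F (X l - A i))
        (fun i _ => hG0 X A i) (Finset.mem_univ i0)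
      have h2 := hPs X
      linarith
    obtain ⟨l, hl⟩ := exists_eq_ciInf_of_finite (f := fun l : Fin k => gauge F (X l - A i0))
    rw [← hl] at h1
    have h2 : ‖X l - A i0‖ ≤ r * C := by
      have := (le_gauge_of_subset_closedBall (x := X l - A i0) habs hr.le hFr).trans h1
      rw [div_le_iff₀ hr] at this
      linarith
    have hlt : ∀ s t : Fin k, s < t → ‖X s - X t‖ ≤ D := by
      intro s t hst
      have e1 := Finset.single_le_sum (f := fun t => if s < t then ‖X s - X t‖ ^ 2 else 0)
        (fun t _ => hP0 X s t) (Finset.mem_univ t)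
      have e2 := Finset.single_le_sum
        (f := fun s => ∑ t : Fin k, if s < t then ‖X s - X t‖ ^ 2 else 0)
        (fun s _ => Finset.sum_nonneg fun t _ => hP0 X s t) (Finset.mem_univ s)
      simp only [if_pos hst] at e1 e2
      have e3 := e1.trans e2
      have e4 : ‖X s - X t‖ ^ 2 ≤ C / (lam * n / 2) := by
        rw [le_div_iff₀ hc]
        have := mul_le_mul_of_nonneg_left e3 hc.le
        have := hGs X A
        linarith
      nlinarith [sq_nonneg (‖X s - X t‖ - 1)]
    have hD0 : 0 ≤ D := by positivity
    have hall : ∀ s t : Fin k, ‖X s - X t‖ ≤ D := by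
      intro s t
      rcases lt_trichotomy s t with h | h | h
      · exact hlt s t h
      · subst h; simpa using hD0
      · rw [norm_sub_rev]; exact hlt t s h
    rw [mem_closedBall_zero_iff, pi_norm_le_iff_of_nonneg (by positivity)]
    intro s
    have : X s = (X s - X l) + (X l - A i0) + A i0 := by abel
    rw [this]
    exact (norm_add₃_le).trans (by have := hall s l; linarith)
  have hK : IsCompact (Metric.closedBall (0 : Fin k → EuclideanSpace ℝ (Fin d)) R \ U) :=
    (isCompact_closedBall _ _).diff hU
  have hev : ∀ᶠ A in nhds Ab,
      ∀ X ∈ Metric.closedBall (0 : Fin k → EuclideanSpace ℝ (Fin d)) R \ U, X ∉ S A := by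
    refine hK.eventually_forall_of_forall_eventually fun X hX => ?_
    have hXS : X ∉ S Ab := fun h => hX.2 (hSU h)
    have hlt : V Ab < f X Ab := by
      refine lt_of_le_of_ne (hVle X Ab) fun h => hXS ?_
      rw [hS]; exact h.symm
    rw [hV] at hlt
    obtain ⟨Y, hY⟩ := exists_lt_of_ciInf_lt hlt
    have hc1 : Continuous (fun p : (Fin n → EuclideanSpace ℝ (Fin d)) ×
      (Fin k → EuclideanSpace ℝ (Fin d)) => f Y p.1) :=
      hcont.comp (continuous_const.prodMk continuous_fst)
    have hc2 : Continuous (fun p : (Fin n → EuclideanSpace ℝ (Fin d)) ×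
      (Fin k → EuclideanSpace ℝ (Fin d)) => f p.2 p.1) :=
      hcont.comp (continuous_snd.prodMk continuous_fst)
    have := (hc1.tendsto (Ab, X)).eventually_lt (hc2.tendsto (Ab, X)) hY
    filter_upwards [this] with p hp hpS
    rw [hS] at hpS
    have h1 : f p.2 p.1 = V p.1 := hpS
    have := hVle Y p.1
    linarith
  have hev2 : ∀ᶠ A in nhds Ab, f 0 A < C := by
    have hc1 : Continuous (fun A => f 0 A) :=
      hcont.comp (continuous_const.prodMk continuous_id)
    exact (hc1.tendsto Ab).eventually_lt_const (by rw [hC]; linarith)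
  have hev3 : ∀ᶠ A in nhds Ab, ‖A i0‖ < ‖Ab i0‖ + 1 := by
    have hc1 : Continuous (fun A : Fin n → EuclideanSpace ℝ (Fin d) => ‖A i0‖) := by fun_prop
    exact (hc1.tendsto Ab).eventually_lt_const (by linarith)
  obtain ⟨W, hW, hWo, hWA⟩ := eventually_nhds_iff.1 (hev.and (hev2.and hev3))
  refine ⟨W, hWo, hWA, fun A hA X hX => ?_⟩
  obtain ⟨h1, h2, h3⟩ := hW A hA
  by_contra hXU
  refine h1 X ⟨hcoer X A ?_ h3.le, hXU⟩ hX
  have hX' := hX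
  rw [hS] at hX'
  have h4 : f X A = V A := hX'
  have := hVle 0 A
  linarith
end
end

section
/- The gradient of g_μ is Lipschitz continuous on ℝ^{k×d} with constant n/μ + λnk: for all X, X' ∈ ℝ^{k×d}, ‖∇g_μ(X') − ∇g_μ(X)‖_F ≤ (n/μ + λnk) ‖X' − X‖_F. -/
open scoped BigOperators RealInnerProductSpace

noncomputable section

theorem pair_sum {d k : ℕ} (x : Fin k → EuclideanSpace ℝ (Fin d)) :
    ∑ s : Fin k, ∑ t : Fin k, (if s < t then ‖x s - x t‖ ^ 2 else 0)
      = k * ∑ s, ‖x s‖ ^ 2 - ‖∑ s, x s‖ ^ 2 := by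
  have h1 : ∑ s : Fin k, ∑ t : Fin k, ‖x s - x t‖ ^ 2
      = ∑ s : Fin k, ∑ t : Fin k, (if s < t then ‖x s - x t‖ ^ 2 else 0)
      + ∑ s : Fin k, ∑ t : Fin k, (if t < s then ‖x s - x t‖ ^ 2 else 0) := by
    simp only [← Finset.sum_add_distrib]
    refine Finset.sum_congr rfl fun s _ => Finset.sum_congr rfl fun t _ => ?_
    rcases lt_trichotomy s t with h | h | h
    · simp [h, h.le, not_lt.mpr h.le]
    · simp [h]
    · simp [h, not_lt.mpr h.le]
  have h2 : ∑ s : Fin k, ∑ t : Fin k, (if t < s then ‖x s - x t‖ ^ 2 else 0)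
      = ∑ s : Fin k, ∑ t : Fin k, (if s < t then ‖x s - x t‖ ^ 2 else 0) := by
    rw [Finset.sum_comm]
    simp only [norm_sub_rev]
  have h3 : ∑ s : Fin k, ∑ t : Fin k, ‖x s - x t‖ ^ 2
      = 2 * (k * ∑ s, ‖x s‖ ^ 2 - ‖∑ s, x s‖ ^ 2) := by
    have h4 : ‖∑ s, x s‖ ^ 2 = ∑ s, ∑ t, ⟪x s, x t⟫ := by
      rw [← real_inner_self_eq_norm_sq, sum_inner]
      simp only [inner_sum]
    rw [h4]
    simp only [norm_sub_sq_real, Finset.sum_add_distrib, Finset.sum_sub_distrib, ← Finset.mul_sum,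
      Finset.sum_const, Finset.card_univ, Fintype.card_fin, nsmul_eq_mul]
    ring
  linarith

theorem lap_norm {d k : ℕ} (D : PiLp 2 (fun _ : Fin k => EuclideanSpace ℝ (Fin d))) :
    ‖(WithLp.toLp 2 (fun l => (k : ℝ) • D l - ∑ s, D s) :
      PiLp 2 (fun _ : Fin k => EuclideanSpace ℝ (Fin d)))‖ ≤ k * ‖D‖ := by
  refine (pow_le_pow_iff_left₀ (norm_nonneg _) (by positivity) two_ne_zero).1 ?_
  rw [mul_pow, PiLp.norm_sq_eq_of_L2, PiLp.norm_sq_eq_of_L2]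
  have h4 : ∑ s, ⟪D s, ∑ t, D t⟫ = ‖∑ s, D s‖ ^ 2 := by
    rw [← real_inner_self_eq_norm_sq, sum_inner]
  simp only [norm_sub_sq_real, Finset.sum_add_distrib, Finset.sum_sub_distrib, ← Finset.mul_sum,
      Finset.sum_const, Finset.card_univ, Fintype.card_fin, nsmul_eq_mul, norm_smul, mul_pow,
      real_inner_smul_left, h4, Real.norm_natCast]
  have : 0 ≤ (k : ℝ) * ‖∑ s, D s‖ ^ 2 := by positivity
  nlinarith

theorem grad_eq {d n k : ℕ} (a : Fin n → EuclideanSpace ℝ (Fin d)) (lam μ : ℝ) (hμ : 0 < μ)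
    (g : PiLp 2 (fun _ : Fin k => EuclideanSpace ℝ (Fin d)) → ℝ)
    (hg : ∀ X : PiLp 2 (fun _ : Fin k => EuclideanSpace ℝ (Fin d)),
      g X = (1 / (2 * μ)) * ∑ i : Fin n, ∑ ℓ : Fin k, ‖X ℓ - a i‖ ^ 2
        + lam * n / 2 * (k * ∑ s, ‖X s‖ ^ 2 - ‖∑ s, X s‖ ^ 2))
    (X : PiLp 2 (fun _ : Fin k => EuclideanSpace ℝ (Fin d))) :
    gradient g X = WithLp.toLp 2 (fun l => (1 / μ) • ∑ i, (X l - a i)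
      + (lam * n) • ((k : ℝ) • X l - ∑ s, X s)) := by
  apply HasGradientAt.gradient
  rw [hasGradientAt_iff_hasFDerivAt, funext hg]
  have hp : ∀ l : Fin k, HasFDerivAt
      (fun X : PiLp 2 (fun _ : Fin k => EuclideanSpace ℝ (Fin d)) => X l)
      (PiLp.proj (𝕜 := ℝ) 2 (fun _ : Fin k => EuclideanSpace ℝ (Fin d)) l) X :=
    fun l => (PiLp.proj (𝕜 := ℝ) 2 (fun _ : Fin k => EuclideanSpace ℝ (Fin d)) l).hasFDerivAt
  have h1 := HasFDerivAt.fun_sum (u := Finset.univ) fun i (_ : i ∈ Finset.univ) =>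
    HasFDerivAt.fun_sum (u := Finset.univ) fun l (_ : l ∈ Finset.univ) =>
      ((hp l).sub_const (a i)).norm_sq
  have h2 := HasFDerivAt.fun_sum (u := Finset.univ) fun l (_ : l ∈ Finset.univ) =>
      (hp l).norm_sq
  have h3 := (HasFDerivAt.fun_sum (u := Finset.univ) fun l (_ : l ∈ Finset.univ) =>
      (hp l)).norm_sq
  refine ((h1.const_mul (1 / (2 * μ))).add
    (((h2.const_mul (k : ℝ)).sub h3).const_mul (lam * n / 2))).congr_fderiv ?_
  refine ContinuousLinearMap.ext fun v => ?_
  rw [InnerProductSpace.toDual_apply_apply, PiLp.inner_apply]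
  simp only [inner_add_left,
    real_inner_smul_left, inner_sub_left, sum_inner, add_apply,
    sub_apply, smul_apply, sum_apply,
    ContinuousLinearMap.comp_apply, innerSL_apply_apply, PiLp.proj_apply, inner_sum,
    Finset.sum_add_distrib, Finset.sum_sub_distrib, ← Finset.mul_sum, smul_eq_mul, two_smul,
    ← two_mul, Finset.sum_const, Finset.card_univ, Fintype.card_fin, ← Nat.cast_smul_eq_nsmul ℝ,
    real_inner_smul_left]
  rw [Finset.sum_comm (f := fun (x : Fin n) (y : Fin k) => ⟪a x, v y⟫)]
  field_simp
  ring

/-- The gradient of `g_μ` is Lipschitz continuous with constant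
`n/μ + λnk` with respect to the Frobenius norm. -/
theorem g_mu_gradient_lipschitz
    (d n k : ℕ) (hn : 0 < n) (hk : 0 < k)
    (a : Fin n → EuclideanSpace ℝ (Fin d))
    (lam μ : ℝ) (hlam : 0 < lam) (hμ : 0 < μ)
    (g : PiLp 2 (fun _ : Fin k => EuclideanSpace ℝ (Fin d)) → ℝ)
    (hg : ∀ X : PiLp 2 (fun _ : Fin k => EuclideanSpace ℝ (Fin d)),
      g X = (1 / (2 * μ)) * ∑ i : Fin n, ∑ ℓ : Fin k, ‖X ℓ - a i‖ ^ 2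
        + lam * n / 2 * ∑ s : Fin k, ∑ t : Fin k, (if s < t then ‖X s - X t‖ ^ 2 else 0))
    (X X' : PiLp 2 (fun _ : Fin k => EuclideanSpace ℝ (Fin d))) :
    ‖gradient g X' - gradient g X‖ ≤ (n / μ + lam * n * k) * ‖X' - X‖ := by
  have hg' := fun X => (hg X).trans (by rw [pair_sum (fun s => X s)])
  rw [grad_eq a lam μ hμ g hg', grad_eq a lam μ hμ g hg']
  have e : (WithLp.toLp 2 (fun l => (1 / μ) • ∑ i, (X' l - a i)
      + (lam * n) • ((k : ℝ) • X' l - ∑ s, X' s)) - WithLp.toLp 2 (fun l => (1 / μ) • ∑ i, (X l - a i)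
      + (lam * n) • ((k : ℝ) • X l - ∑ s, X s)) :
      PiLp 2 (fun _ : Fin k => EuclideanSpace ℝ (Fin d)))
      = (n / μ) • (X' - X) + (lam * n) • WithLp.toLp 2
        (fun l => (k : ℝ) • (X' - X) l - ∑ s, (X' - X) s) := by
    ext l j
    simp [Finset.sum_sub_distrib]
    ring
  rw [e]
  refine (norm_add_le _ _).trans ?_
  rw [norm_smul, norm_smul, Real.norm_of_nonneg (by positivity), Real.norm_of_nonneg (by positivity),
    add_mul, mul_assoc (lam * n)]
  gcongr
  exact lap_norm _
end
end

section
/- The function h_μ : ℝ^{k×d} → ℝ is convex. -/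
open scoped BigOperators RealInnerProductSpace

noncomputable section

lemma aux_iSup {ι E : Type*} [Nonempty ι] [AddCommGroup E] [Module ℝ E] (f : ι → E → ℝ)
    (hf : ∀ i, ConvexOn ℝ Set.univ (f i)) (hb : ∀ x, BddAbove (Set.range fun i => f i x)) :
    ConvexOn ℝ Set.univ (fun x => ⨆ i, f i x) := by
  refine ⟨convex_univ, ?_⟩
  intro x _ y _ s t hs ht hst
  refine ciSup_le fun i => ((hf i).2 (Set.mem_univ x) (Set.mem_univ y) hs ht hst).trans ?_
  have h1 := le_ciSup (hb x) i
  have h2 := le_ciSup (hb y) i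
  simp only [smul_eq_mul] at *
  gcongr

lemma aux_sum {ι E : Type*} [AddCommGroup E] [Module ℝ E] (s : Finset ι) (f : ι → E → ℝ)
    (hf : ∀ i, ConvexOn ℝ Set.univ (f i)) :
    ConvexOn ℝ Set.univ (fun x => ∑ i ∈ s, f i x) := by
  classical
  induction s using Finset.induction_on with
  | empty => simpa using convexOn_const (0 : ℝ) convex_univ
  | insert i s hi ih =>
    simp only [Finset.sum_insert hi]
    exact (hf i).add ih

lemma aux_infDist {E : Type*} [NormedAddCommGroup E] [NormedSpace ℝ E] (S : Set E)
    (hS : Convex ℝ S) (hne : S.Nonempty) :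
    ConvexOn ℝ Set.univ (fun x => Metric.infDist x S) := by
  refine ⟨convex_univ, ?_⟩
  intro x _ y _ s t hs ht hst
  refine le_of_forall_pos_le_add fun ε hε => ?_
  obtain ⟨u, hu, hu'⟩ := (Metric.infDist_lt_iff hne).1
    (show Metric.infDist x S < Metric.infDist x S + ε by linarith)
  obtain ⟨v, hv, hv'⟩ := (Metric.infDist_lt_iff hne).1
    (show Metric.infDist y S < Metric.infDist y S + ε by linarith)
  have h1 := Metric.infDist_le_dist_of_mem (x := s • x + t • y) (hS hu hv hs ht hst)
  have h2 : dist (s • x + t • y) (s • u + t • v) ≤ s * dist x u + t * dist y v := by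
    refine (dist_add_add_le _ _ _ _).trans ?_
    rw [dist_smul₀, dist_smul₀, Real.norm_of_nonneg hs, Real.norm_of_nonneg ht]
  simp only [smul_eq_mul]
  have h3 := mul_le_mul_of_nonneg_left hu'.le hs
  have h4 := mul_le_mul_of_nonneg_left hv'.le ht
  have h5 : s * ε + t * ε = ε := by rw [← add_mul, hst, one_mul]
  linarith

lemma aux_comp {E G : Type*} [AddCommGroup E] [Module ℝ E] [AddCommGroup G] [Module ℝ G]
    (f : G → ℝ) (hf : ConvexOn ℝ Set.univ f) (g : E → G)
    (hg : ∀ x y : E, ∀ s t : ℝ, s + t = 1 → g (s • x + t • y) = s • g x + t • g y) :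
    ConvexOn ℝ Set.univ (fun x => f (g x)) := by
  refine ⟨convex_univ, ?_⟩
  intro x _ y _ s t hs ht hst
  simp only [hg x y s t hst]
  exact hf.2 (Set.mem_univ _) (Set.mem_univ _) hs ht hst

/-- The function `h_μ` (the concave part of the smoothed DC decomposition)
is convex on `ℝ^{k×d}`. -/
theorem h_mu_convex
    (d n k : ℕ) (hn : 0 < n) (hk : 0 < k)
    (F : Set (EuclideanSpace ℝ (Fin d)))
    (hFcomp : IsCompact F) (hFconv : Convex ℝ F)
    (hF0 : (0 : EuclideanSpace ℝ (Fin d)) ∈ interior F)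
    (polar : Set (EuclideanSpace ℝ (Fin d)))
    (hpolar : polar = {v : EuclideanSpace ℝ (Fin d) | ∀ x ∈ F, ⟪v, x⟫ ≤ 1})
    (a : Fin n → EuclideanSpace ℝ (Fin d))
    (μ : ℝ) (hμ : 0 < μ)
    (rhoMu : EuclideanSpace ℝ (Fin d) → ℝ)
    (hrhoMu : ∀ z : EuclideanSpace ℝ (Fin d),
      rhoMu z = ⨆ y ∈ polar, (⟪z, y⟫ - μ / 2 * ‖y‖ ^ 2))
    (h : PiLp 2 (fun _ : Fin k => EuclideanSpace ℝ (Fin d)) → ℝ)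
    (hh : ∀ X : PiLp 2 (fun _ : Fin k => EuclideanSpace ℝ (Fin d)),
      h X = μ / 2 * ∑ i : Fin n, ∑ ℓ : Fin k,
          (Metric.infDist (μ⁻¹ • (X ℓ - a i)) polar) ^ 2
        + ∑ i : Fin n, ⨆ r : Fin k, ∑ ℓ ∈ Finset.univ.erase r, rhoMu (X ℓ - a i)) :
    ConvexOn ℝ Set.univ h := by
  have hPne : polar.Nonempty := ⟨0, by simp [hpolar]⟩
  have hPc : Convex ℝ polar := by
    rw [hpolar]
    intro u hu v hv s t hs ht hst x hx
    rw [inner_add_left, real_inner_smul_left, real_inner_smul_left]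
    have h1 := mul_le_mul_of_nonneg_left (hu x hx) hs
    have h2 := mul_le_mul_of_nonneg_left (hv x hx) ht
    linarith
  have hrho : ConvexOn ℝ Set.univ rhoMu := by
    rw [show rhoMu = _ from funext hrhoMu]
    apply aux_iSup
    · intro y
      by_cases hy : y ∈ polar
      · simp only [hy, ciSup_unique]
        refine ⟨convex_univ, ?_⟩
        intro u _ v _ s t hs ht hst
        beta_reduce
        rw [inner_add_left, real_inner_smul_left, real_inner_smul_left]
        simp only [smul_eq_mul]
        have : t = 1 - s := by linarith
        subst this
        apply le_of_eq
        ring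
      · simp only [hy, Real.iSup_of_isEmpty]
        exact convexOn_const (0 : ℝ) convex_univ
    · intro z
      refine ⟨‖z‖ ^ 2 / (2 * μ), ?_⟩
      rintro _ ⟨y, rfl⟩
      have h0 : 0 ≤ ‖z‖ ^ 2 / (2 * μ) := by positivity
      refine Real.iSup_le (fun _ => ?_) h0
      have h1 := real_inner_le_norm z y
      rw [le_div_iff₀ (by positivity)]
      nlinarith [sq_nonneg (‖z‖ - μ * ‖y‖)]
  have hne : Nonempty (Fin k) := ⟨⟨0, hk⟩⟩
  rw [show h = _ from funext hh]
  refine ConvexOn.add (ConvexOn.smul (by positivity : 0 ≤ μ / 2) ?_) ?_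
  · refine aux_sum _ _ fun i => aux_sum _ _ fun l => ?_
    refine ConvexOn.pow (aux_comp _ (aux_infDist polar hPc hPne) _ ?_)
      (fun _ _ => Metric.infDist_nonneg) 2
    intro x y s t hst
    have : t = 1 - s := by linarith
    subst this
    simp only [PiLp.add_apply, PiLp.smul_apply]
    module
  · refine aux_sum _ _ fun i => aux_iSup _ (fun r => aux_sum _ _ fun l => ?_) fun X =>
      (Set.finite_range _).bddAbove
    refine aux_comp _ hrho _ ?_
    intro x y s t hst
    have : t = 1 - s := by linarith
    subst this
    simp only [PiLp.add_apply, PiLp.smul_apply]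
    module
end
end

section
/- Accumulation points of the DCA iteration are critical points: let (X^{(t)})_{t≥0} be a sequence in ℝ^{k×d} and (Y^{(t)}) a sequence such that for every t, Y^{(t)} is a subgradient of h_μ at X^{(t)} and ∇g_μ(X^{(t+1)}) = Y^{(t)}. If X* is an accumulation point of (X^{(t)}) along a subsequence (t_j) with X^{(t_j)} → X* and ‖X^{(t_j+1)} − X^{(t_j)}‖_F → 0, then ∇g_μ(X*) is a subgradient of h_μ at X*. -/
open scoped BigOperators RealInnerProductSpace

noncomputable section

set_option maxHeartbeats 2000000 in
/-- Accumulation points of the DCA iteration are critical points: if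
`Y^{(t)} ∈ ∂h_μ(X^{(t)})`, `∇g_μ(X^{(t+1)}) = Y^{(t)}`, and along a subsequence
`X^{(t_j)} → X*` with `‖X^{(t_j+1)} − X^{(t_j)}‖ → 0`, then `∇g_μ(X*) ∈ ∂h_μ(X*)`. -/
theorem dca_accumulation_point_critical
    (d n k : ℕ) (hn : 0 < n) (hk : 0 < k)
    (F : Set (EuclideanSpace ℝ (Fin d)))
    (hFcomp : IsCompact F) (hFconv : Convex ℝ F)
    (hF0 : (0 : EuclideanSpace ℝ (Fin d)) ∈ interior F)
    (polar : Set (EuclideanSpace ℝ (Fin d)))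
    (hpolar : polar = {v : EuclideanSpace ℝ (Fin d) | ∀ x ∈ F, ⟪v, x⟫ ≤ 1})
    (a : Fin n → EuclideanSpace ℝ (Fin d))
    (lam μ : ℝ) (hlam : 0 < lam) (hμ : 0 < μ)
    (rhoMu : EuclideanSpace ℝ (Fin d) → ℝ)
    (hrhoMu : ∀ z : EuclideanSpace ℝ (Fin d),
      rhoMu z = ⨆ y ∈ polar, (⟪z, y⟫ - μ / 2 * ‖y‖ ^ 2))
    (g h : PiLp 2 (fun _ : Fin k => EuclideanSpace ℝ (Fin d)) → ℝ)
    (hg : ∀ X : PiLp 2 (fun _ : Fin k => EuclideanSpace ℝ (Fin d)),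
      g X = (1 / (2 * μ)) * ∑ i : Fin n, ∑ ℓ : Fin k, ‖X ℓ - a i‖ ^ 2
        + lam * n / 2 * ∑ s : Fin k, ∑ t : Fin k, (if s < t then ‖X s - X t‖ ^ 2 else 0))
    (hh : ∀ X : PiLp 2 (fun _ : Fin k => EuclideanSpace ℝ (Fin d)),
      h X = μ / 2 * ∑ i : Fin n, ∑ ℓ : Fin k,
          (Metric.infDist (μ⁻¹ • (X ℓ - a i)) polar) ^ 2
        + ∑ i : Fin n, ⨆ r : Fin k, ∑ ℓ ∈ Finset.univ.erase r, rhoMu (X ℓ - a i))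
    (X Y : ℕ → PiLp 2 (fun _ : Fin k => EuclideanSpace ℝ (Fin d)))
    (hsub : ∀ t : ℕ, ∀ Z : PiLp 2 (fun _ : Fin k => EuclideanSpace ℝ (Fin d)),
      h (X t) + ⟪Y t, Z - X t⟫ ≤ h Z)
    (hgstep : ∀ t : ℕ, gradient g (X (t + 1)) = Y t)
    (Xstar : PiLp 2 (fun _ : Fin k => EuclideanSpace ℝ (Fin d)))
    (tj : ℕ → ℕ) (htj : StrictMono tj)
    (hconv : Filter.Tendsto (fun j => X (tj j)) Filter.atTop (nhds Xstar))
    (hstep : Filter.Tendsto (fun j => ‖X (tj j + 1) - X (tj j)‖) Filter.atTop (nhds 0)) :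
    ∀ Z : PiLp 2 (fun _ : Fin k => EuclideanSpace ℝ (Fin d)),
      h Xstar + ⟪gradient g Xstar, Z - Xstar⟫ ≤ h Z := by
  have hcoord : ∀ l : Fin k, ContDiff ℝ 1
      (fun X : PiLp 2 (fun _ : Fin k => EuclideanSpace ℝ (Fin d)) => X l) := fun l =>
    (PiLp.proj (𝕜 := ℝ) 2 (fun _ : Fin k => EuclideanSpace ℝ (Fin d)) l).contDiff
  have hgC : ContDiff ℝ 1 g := by
    rw [funext hg]
    refine ContDiff.add (contDiff_const.mul ?_) (contDiff_const.mul ?_)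
    · exact ContDiff.sum fun i _ => ContDiff.sum fun l _ =>
        ((hcoord l).sub contDiff_const).norm_sq ℝ
    · refine ContDiff.sum fun s _ => ContDiff.sum fun t _ => ?_
      split_ifs
      · exact ((hcoord s).sub (hcoord t)).norm_sq ℝ
      · exact contDiff_const
  have hgrad : Continuous (gradient g) := by
    have := hgC.continuous_fderiv one_ne_zero
    unfold gradient
    exact (LinearIsometryEquiv.continuous _).comp this
  obtain ⟨R, hR0, hR⟩ : ∃ R : ℝ, 0 ≤ R ∧ ∀ y ∈ polar, ‖y‖ ≤ R := by
    obtain ⟨r, hr, hball⟩ := Metric.mem_nhds_iff.1 (mem_interior_iff_mem_nhds.1 hF0)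
    refine ⟨2 / r, by positivity, fun y hy => ?_⟩
    rw [hpolar] at hy
    by_cases hy0 : y = 0
    · subst hy0; simp; positivity
    have hn : 0 < ‖y‖ := norm_pos_iff.2 hy0
    have h1 : ((r / 2) * ‖y‖⁻¹) • y ∈ F := by
      apply hball
      rw [mem_ball_zero_iff, norm_smul, Real.norm_of_nonneg (by positivity), mul_assoc,
        inv_mul_cancel₀ hn.ne']
      linarith
    have h2 := hy _ h1
    rw [real_inner_smul_right, real_inner_self_eq_norm_sq] at h2
    have h3 : r / 2 * ‖y‖⁻¹ * ‖y‖ ^ 2 = r / 2 * ‖y‖ := by field_simp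
    rw [h3] at h2
    rw [le_div_iff₀ hr]
    linarith
  have h0 : (0 : EuclideanSpace ℝ (Fin d)) ∈ polar := by
    rw [hpolar]; intro x _; simp
  have hin : ∀ z y : EuclideanSpace ℝ (Fin d), y ∈ polar → ⟪z, y⟫ ≤ R * ‖z‖ := fun z y hy =>
    (real_inner_le_norm z y).trans (by
      rw [mul_comm]; exact mul_le_mul_of_nonneg_right (hR y hy) (norm_nonneg _))
  have hbdd : ∀ z : EuclideanSpace ℝ (Fin d), BddAbove (Set.range fun y =>
      ⨆ (_ : y ∈ polar), (⟪z, y⟫ - μ / 2 * ‖y‖ ^ 2)) := by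
    intro z
    refine ⟨R * ‖z‖, ?_⟩
    rintro _ ⟨y, rfl⟩
    by_cases hy : y ∈ polar
    · simp only [hy, ciSup_unique]
      have : 0 ≤ μ / 2 * ‖y‖ ^ 2 := by positivity
      linarith [hin z y hy]
    · simp only [hy, Real.iSup_of_isEmpty]
      positivity
  have hle : ∀ z y : EuclideanSpace ℝ (Fin d), y ∈ polar →
      ⟪z, y⟫ - μ / 2 * ‖y‖ ^ 2 ≤ rhoMu z := by
    intro z y hy
    rw [hrhoMu]
    have := le_ciSup (hbdd z) y
    simpa only [hy, ciSup_unique] using this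
  have hnn : ∀ z, 0 ≤ rhoMu z := fun z => by simpa using hle z 0 h0
  have hlip : ∀ z w, rhoMu z ≤ rhoMu w + R * ‖z - w‖ := by
    intro z w
    rw [hrhoMu z]
    refine ciSup_le fun y => ?_
    by_cases hy : y ∈ polar
    · simp only [hy, ciSup_unique]
      have h1 := hle w y hy
      have h2 := hin (z - w) y hy
      rw [inner_sub_left] at h2
      linarith
    · simp only [hy, Real.iSup_of_isEmpty]
      have := hnn w
      positivity
  have hrc : Continuous rhoMu := by
    refine (LipschitzWith.of_le_add_mul ⟨R, hR0⟩ fun z w => ?_).continuous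
    rw [dist_eq_norm]; exact hlip z w
  have hic : Continuous (fun z : EuclideanSpace ℝ (Fin d) =>
      (Metric.infDist (μ⁻¹ • z) polar) ^ 2) :=
    ((Metric.continuous_infDist_pt polar).comp (continuous_const_smul μ⁻¹)).pow 2
  have hhc : Continuous h := by
    have : Nonempty (Fin k) := ⟨⟨0, hk⟩⟩
    rw [funext hh]
    refine Continuous.add (continuous_const.mul ?_) ?_
    · exact continuous_finsetSum _ fun i _ => continuous_finsetSum _ fun l _ =>
        hic.comp ((hcoord l).continuous.sub continuous_const)
    · refine continuous_finsetSum _ fun i _ => ?_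
      simp only [← Finset.sup'_univ_eq_ciSup]
      refine Continuous.finset_sup'_apply _ fun r _ => ?_
      exact continuous_finsetSum _ fun l _ =>
        hrc.comp ((hcoord l).continuous.sub continuous_const)
  intro Z
  have hX1 : Filter.Tendsto (fun j => X (tj j + 1)) Filter.atTop (nhds Xstar) := by
    have := (tendsto_zero_iff_norm_tendsto_zero.2 hstep).add hconv
    simpa using this
  have hY : Filter.Tendsto (fun j => Y (tj j)) Filter.atTop (nhds (gradient g Xstar)) := by
    have := (hgrad.tendsto Xstar).comp hX1
    simpa only [Function.comp_def, hgstep] using this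
  exact le_of_tendsto' (((hhc.tendsto Xstar).comp hconv).add
    (hY.inner (tendsto_const_nhds.sub hconv))) fun j => hsub (tj j) Z
end
end
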